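/- Let Ω ⊆ ℝ³ be a bounded open set, x ∈ Ω, and σ : [0,1] → closure(Ω) a needle with tip at x. Fix j ∈ {1,2,3}, set Φ(z) = ∂G/∂z_j (z − x), and let (v_n) be functions harmonic on Ω with ∫_K (v_n − Φ)² dz → 0 for every compact K ⊆ Ω ∖ σ([0,1]). Then the part of the needle inside Ω is recovered from the blow-up set of the sequence: σ((0,1]) = {z ∈ Ω : for every open ball B centered at z, ∫_{B ∩ Ω} v_n² dz → +∞ as n → ∞}. (The needle-recovery formula stated after Proposition 3.1.) -/

import Mathlib

open MeasureTheory Filter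
open scoped ENNReal Topology

noncomputable section

/-- A curve `σ : ℝ → ℝ³` is piecewise linear (on `[0,1]`): there is a partition
`0 = t₀ < t₁ < ⋯ < t_m = 1` such that `σ` is affine on each subinterval. -/
def PiecewiseLinear (σ : ℝ → EuclideanSpace ℝ (Fin 3)) : Prop :=
  ∃ (m : ℕ) (t : Fin (m + 1) → ℝ), StrictMono t ∧ t 0 = 0 ∧ t (Fin.last m) = 1 ∧
    ∀ i : Fin m, ∀ u ∈ Set.Icc (t i.castSucc) (t i.succ),
      σ u = σ (t i.castSucc) +
        ((u - t i.castSucc) / (t i.succ - t i.castSucc)) •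
          (σ (t i.succ) - σ (t i.castSucc))

/-- A needle with tip at `x ∈ Ω`: a piecewise linear injective curve
`σ : [0,1] → closure Ω` with `σ(0) ∈ ∂Ω`, `σ(1) = x` and `σ(t) ∈ Ω` for `0 < t < 1`. -/
def IsNeedle (Ω : Set (EuclideanSpace ℝ (Fin 3))) (x : EuclideanSpace ℝ (Fin 3))
    (σ : ℝ → EuclideanSpace ℝ (Fin 3)) : Prop :=
  PiecewiseLinear σ ∧ Set.InjOn σ (Set.Icc 0 1) ∧
    (∀ t ∈ Set.Icc (0 : ℝ) 1, σ t ∈ closure Ω) ∧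
    σ 0 ∈ frontier Ω ∧ σ 1 = x ∧ ∀ t ∈ Set.Ioo (0 : ℝ) 1, σ t ∈ Ω

/-- A function is harmonic on an open set `Ω ⊆ ℝ³` if it is twice continuously
differentiable there and its Laplacian vanishes on `Ω`. -/
def HarmonicOnSet (v : EuclideanSpace ℝ (Fin 3) → ℝ)
    (Ω : Set (EuclideanSpace ℝ (Fin 3))) : Prop :=
  ContDiffOn ℝ 2 v Ω ∧ ∀ z ∈ Ω,
    (∑ i : Fin 3,
      fderiv ℝ (fun w => fderiv ℝ v w (EuclideanSpace.single i 1)) z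
        (EuclideanSpace.single i 1)) = 0

/-- Three-dimensional Euclidean space. -/
abbrev NE3 := EuclideanSpace ℝ (Fin 3)

lemma nr_contDiffOn_dir {Ω : Set NE3} (hΩ : IsOpen Ω) {f : NE3 → ℝ} {n m : WithTop ℕ∞}
    (hf : ContDiffOn ℝ n f Ω) (hmn : m + 1 ≤ n) (e : NE3) :
    ContDiffOn ℝ m (fun w => fderiv ℝ f w e) Ω :=
  (hf.fderiv_of_isOpen hΩ hmn).clm_apply contDiffOn_const

lemma nr_integrable_mul {Ω : Set NE3} (hΩ : IsOpen Ω) {f g : NE3 → ℝ}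
    (hf : ContinuousOn f Ω) (hg : Continuous g) (hs : tsupport g ⊆ Ω)
    (hc : HasCompactSupport g) : Integrable (fun w => f w * g w) := by
  have hcont : Continuous (fun w => f w * g w) := by
    rw [continuous_iff_continuousAt]
    intro p
    by_cases hp : p ∈ tsupport g
    · exact (hf.continuousAt (hΩ.mem_nhds (hs hp))).mul hg.continuousAt
    · have h0 : (fun w => f w * g w) =ᶠ[𝓝 p] fun _ => 0 := by
        have := notMem_tsupport_iff_eventuallyEq.1 hp
        filter_upwards [this] with w hw
        simp [hw]
      exact h0.continuousAt
  exact hcont.integrable_of_hasCompactSupport hc.mul_left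

lemma nr_tsupport_dir (η : NE3 → ℝ) (e : NE3) :
    tsupport (fun w => fderiv ℝ η w e) ⊆ tsupport η :=
  tsupport_fderiv_apply_subset ℝ e

lemma nr_ibp2 {Ω : Set NE3} (hΩ : IsOpen Ω) {f η : NE3 → ℝ}
    (hf : ContDiffOn ℝ 2 f Ω) (hη : ContDiff ℝ 2 η) (hs : tsupport η ⊆ Ω)
    (hc : HasCompactSupport η) (e : NE3) :
    Integrable (fun w => f w * fderiv ℝ (fun u => fderiv ℝ η u e) w e) ∧
    Integrable (fun w => fderiv ℝ (fun u => fderiv ℝ f u e) w e * η w) ∧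
    ∫ w, f w * fderiv ℝ (fun u => fderiv ℝ η u e) w e =
      ∫ w, fderiv ℝ (fun u => fderiv ℝ f u e) w e * η w := by
  have hη1 : ContDiff ℝ 1 (fun u => fderiv ℝ η u e) := by
    rw [← contDiffOn_univ] at hη ⊢
    exact nr_contDiffOn_dir isOpen_univ hη (by norm_num) e
  have hη2 : Continuous (fun w => fderiv ℝ (fun u => fderiv ℝ η u e) w e) := by
    rw [← continuousOn_univ]
    rw [← contDiffOn_univ] at hη1
    exact (nr_contDiffOn_dir (m := 0) isOpen_univ hη1 (by norm_num) e).continuousOn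
  have hf1 : ContDiffOn ℝ 1 (fun u => fderiv ℝ f u e) Ω :=
    nr_contDiffOn_dir hΩ hf (by norm_num) e
  have hf2 : ContinuousOn (fun w => fderiv ℝ (fun u => fderiv ℝ f u e) w e) Ω :=
    (nr_contDiffOn_dir (m := 0) hΩ hf1 (by norm_num) e).continuousOn
  have hs1 : tsupport (fun u => fderiv ℝ η u e) ⊆ Ω := (nr_tsupport_dir η e).trans hs
  have hs2 : tsupport (fun w => fderiv ℝ (fun u => fderiv ℝ η u e) w e) ⊆ Ω :=
    (nr_tsupport_dir _ e).trans hs1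
  have hc1 : HasCompactSupport (fun u => fderiv ℝ η u e) :=
    IsCompact.of_isClosed_subset hc (isClosed_tsupport _) (nr_tsupport_dir η e)
  have hc2 : HasCompactSupport (fun w => fderiv ℝ (fun u => fderiv ℝ η u e) w e) :=
    IsCompact.of_isClosed_subset hc1 (isClosed_tsupport _) (nr_tsupport_dir _ e)
  have i1 := nr_integrable_mul hΩ hf.continuousOn hη2 hs2 hc2
  have i2 := nr_integrable_mul hΩ hf2 hη.continuous hs hc
  have i3 := nr_integrable_mul hΩ hf1.continuousOn hη1.continuous hs1 hc1
  have i4 := nr_integrable_mul hΩ hf.continuousOn hη1.continuous hs1 hc1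
  have i5 := nr_integrable_mul hΩ hf1.continuousOn hη.continuous hs hc
  refine ⟨i1, i2, ?_⟩
  rw [integral_mul_fderiv_eq_neg_fderiv_mul_of_integrable i3 i1 i4
    (fun p hp => (hf.differentiableOn (by norm_num)).differentiableAt (hΩ.mem_nhds (hs1 hp)))
    (fun p _ => hη1.differentiable (by norm_num) p),
    integral_mul_fderiv_eq_neg_fderiv_mul_of_integrable (f := fun u => fderiv ℝ f u e) i2 i3 i5
    (fun p hp => (hf1.differentiableOn (by norm_num)).differentiableAt (hΩ.mem_nhds (hs hp)))
    (fun p _ => hη.differentiable (by norm_num) p), neg_neg]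

/-- Laplacian in coordinates. -/
def nrLap (η : NE3 → ℝ) (z : NE3) : ℝ :=
  ∑ i : Fin 3, fderiv ℝ (fun w => fderiv ℝ η w (EuclideanSpace.single i 1)) z
        (EuclideanSpace.single i 1)

lemma nr_second_sq {Ω : Set NE3} (hΩ : IsOpen Ω) {f : NE3 → ℝ}
    (hf : ContDiffOn ℝ 2 f Ω) (e : NE3) {z : NE3} (hz : z ∈ Ω) :
    fderiv ℝ (fun u => fderiv ℝ (fun w => (f w) ^ 2) u e) z e =
      2 * (fderiv ℝ f z e) ^ 2 + 2 * f z * fderiv ℝ (fun u => fderiv ℝ f u e) z e := by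
  have hd : ∀ u ∈ Ω, DifferentiableAt ℝ f u := fun u hu =>
    (hf.differentiableOn (by norm_num)).differentiableAt (hΩ.mem_nhds hu)
  have hf1 : ContDiffOn ℝ 1 (fun u => fderiv ℝ f u e) Ω :=
    nr_contDiffOn_dir hΩ hf (by norm_num) e
  have hd1 : DifferentiableAt ℝ (fun u => fderiv ℝ f u e) z :=
    (hf1.differentiableOn (by norm_num)).differentiableAt (hΩ.mem_nhds hz)
  have h1 : (fun u => fderiv ℝ (fun w => (f w) ^ 2) u e) =ᶠ[𝓝 z]
      fun u => 2 * (f u * fderiv ℝ f u e) := by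
    filter_upwards [hΩ.mem_nhds hz] with u hu
    rw [((hd u hu).hasFDerivAt.pow 2).fderiv]
    simp
    ring
  have h2 : HasFDerivAt (fun u => 2 * (f u * fderiv ℝ f u e)) _ z :=
    ((hd z hz).hasFDerivAt.mul hd1.hasFDerivAt).const_mul 2
  rw [h1.fderiv_eq, h2.fderiv]
  simp
  ring

lemma nr_energy {Ω : Set NE3} (hΩ : IsOpen Ω) {v η : NE3 → ℝ}
    (hv : HarmonicOnSet v Ω) (hη : ContDiff ℝ 2 η) (hs : tsupport η ⊆ Ω)
    (hc : HasCompactSupport η) (hneg : ∀ w, η w ≤ 0) :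
    Integrable (fun w => (v w) ^ 2 * nrLap η w) ∧ ∫ w, (v w) ^ 2 * nrLap η w ≤ 0 := by
  have hf : ContDiffOn ℝ 2 (fun w => (v w) ^ 2) Ω := hv.1.pow 2
  have H := fun i : Fin 3 => nr_ibp2 hΩ hf hη hs hc (EuclideanSpace.single i 1)
  have e1 : (fun w => (v w) ^ 2 * nrLap η w) = fun w => ∑ i : Fin 3, (v w) ^ 2 *
      fderiv ℝ (fun u => fderiv ℝ η u (EuclideanSpace.single i 1)) w
        (EuclideanSpace.single i 1) := by
    funext w
    rw [nrLap, Finset.mul_sum]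
  rw [e1]
  refine ⟨integrable_finsetSum _ fun i _ => (H i).1, ?_⟩
  rw [integral_finsetSum _ fun i _ => (H i).1]
  rw [Finset.sum_congr rfl fun i _ => (H i).2.2, ← integral_finsetSum _ fun i _ => (H i).2.1]
  apply integral_nonpos
  intro w
  change ∑ i : Fin 3, _ ≤ 0
  by_cases hw : w ∈ Ω
  · rw [← Finset.sum_mul]
    apply mul_nonpos_of_nonneg_of_nonpos _ (hneg w)
    rw [Finset.sum_congr rfl fun i _ => nr_second_sq hΩ hv.1 (EuclideanSpace.single i 1) hw,
      Finset.sum_add_distrib, ← Finset.mul_sum, ← Finset.mul_sum, hv.2 w hw]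
    have := Finset.sum_nonneg (s := Finset.univ)
      fun (i : Fin 3) _ => sq_nonneg (fderiv ℝ v w (EuclideanSpace.single i 1))
    linarith
  · have : η w = 0 := image_eq_zero_of_notMem_tsupport fun h => hw (hs h)
    simp [this]

lemma nr_lap_quad (D : ℝ) (z : NE3) : nrLap (fun w => ‖w‖ ^ 2 - D) z = 6 := by
  have h1 : ∀ e : NE3, (fun w => fderiv ℝ (fun w : NE3 => ‖w‖ ^ 2 - D) w e) =
      fun w => 2 * (innerSL ℝ e w) := by
    intro e
    funext w
    have := ((hasStrictFDerivAt_norm_sq w).hasFDerivAt.sub_const D).fderiv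
    rw [this]
    simp [real_inner_comm]
  have h2 : ∀ e : NE3, fderiv ℝ (fun w => fderiv ℝ (fun w : NE3 => ‖w‖ ^ 2 - D) w e) z e
      = 2 * ‖e‖ ^ 2 := by
    intro e
    rw [h1 e, (((innerSL ℝ e).hasFDerivAt (x := z)).const_mul 2).fderiv]
    simp
  simp only [nrLap, h2]
  simp
  norm_num

lemma nr_lap_congr {f g : NE3 → ℝ} {z : NE3} (h : f =ᶠ[𝓝 z] g) : nrLap f z = nrLap g z := by
  unfold nrLap
  refine Finset.sum_congr rfl fun i _ => ?_
  have : (fun w => fderiv ℝ f w (EuclideanSpace.single i 1)) =ᶠ[𝓝 z]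
      fun w => fderiv ℝ g w (EuclideanSpace.single i 1) := by
    filter_upwards [h.eventuallyEq_nhds] with w hw
    rw [hw.fderiv_eq]
  rw [this.fderiv_eq]

lemma nr_lap_cont {η : NE3 → ℝ} (hη : ContDiff ℝ 2 η) : Continuous (nrLap η) := by
  unfold nrLap
  refine continuous_finsetSum _ fun i _ => ?_
  rw [← contDiffOn_univ] at hη
  rw [← continuousOn_univ]
  exact (nr_contDiffOn_dir (m := 0) isOpen_univ
    (nr_contDiffOn_dir (m := 1) isOpen_univ hη (by norm_num) _) (by norm_num) _).continuousOn

lemma nr_control {Ω : Set NE3} (hΩ : IsOpen Ω) {S : Set NE3} (hS : IsCompact S) {δ : ℝ}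
    (hδ : 0 < δ) (hK : Metric.cthickening δ S ⊆ Ω) :
    ∃ C : ℝ, 0 ≤ C ∧ ∀ v, HarmonicOnSet v Ω →
      ∫ w in Metric.thickening (δ / 2) S, (v w) ^ 2 ≤
        C * ∫ w in Metric.cthickening δ S \ Metric.thickening (δ / 2) S, (v w) ^ 2 := by
  set K := Metric.cthickening δ S with hKdef
  set V := Metric.thickening (δ / 2) S with hVdef
  have hKc : IsCompact K := hS.cthickening
  have hVo : IsOpen V := Metric.isOpen_thickening
  have hVK : V ⊆ K := Metric.thickening_subset_cthickening_of_le (by linarith) S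
  obtain ⟨χ, hχd, hχr, hχs, hχ1⟩ := exists_contMDiff_support_eq_eq_one_iff (n := 2)
    (modelWithCornersSelf ℝ NE3) (Metric.isOpen_thickening (δ := δ) (E := S))
    (Metric.isClosed_cthickening (δ := δ / 2) (E := S))
    (Metric.cthickening_subset_thickening' hδ (by linarith) S)
  have hχd' : ContDiff ℝ 2 χ := hχd.contDiff
  obtain ⟨D, hD⟩ := hKc.exists_bound_of_continuousOn (f := fun w : NE3 => ‖w‖ ^ 2)
    (by fun_prop)
  set q : NE3 → ℝ := fun w => ‖w‖ ^ 2 - D with hq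
  set η : NE3 → ℝ := fun w => χ w * q w with hηdef
  have hη : ContDiff ℝ 2 η := hχd'.mul ((contDiff_norm_sq ℝ).sub contDiff_const)
  have htsχ : tsupport χ ⊆ K := by
    rw [tsupport, hχs]
    exact Metric.closure_thickening_subset_cthickening δ S
  have hts : tsupport η ⊆ K := (tsupport_mul_subset_left).trans htsχ
  have hcs : HasCompactSupport η := hKc.of_isClosed_subset (isClosed_tsupport _) hts
  have hneg : ∀ w, η w ≤ 0 := by
    intro w
    by_cases hw : w ∈ K
    · have h1 : 0 ≤ χ w := (hχr ⟨w, rfl⟩).1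
      have h2 := (le_abs_self _).trans (hD w hw)
      exact mul_nonpos_of_nonneg_of_nonpos h1 (by simp only [hq]; linarith)
    · exact (image_eq_zero_of_notMem_tsupport fun h => hw (hts h)).le
  have hlapV : ∀ w ∈ V, nrLap η w = 6 := by
    intro w hw
    rw [← nr_lap_quad D w]
    apply nr_lap_congr
    filter_upwards [hVo.mem_nhds hw] with u hu
    have : χ u = 1 := (hχ1 u).1 (Metric.thickening_subset_cthickening _ _ hu)
    simp [hηdef, this, hq]
  have hlap0 : ∀ w, w ∉ K → nrLap η w = 0 := by
    intro w hw
    have h0 : η =ᶠ[𝓝 w] fun _ => 0 := notMem_tsupport_iff_eventuallyEq.1 fun h => hw (hts h)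
    rw [nr_lap_congr h0]
    simp [nrLap]
  obtain ⟨C, hC⟩ := hKc.exists_bound_of_continuousOn (f := nrLap η)
    (nr_lap_cont hη).continuousOn
  refine ⟨|C| / 6, by positivity, fun v hv => ?_⟩
  obtain ⟨hint, hle⟩ := nr_energy hΩ hv hη (hts.trans hK) hcs hneg
  have hvi : IntegrableOn (fun w => (v w) ^ 2) K :=
    ((hv.1.continuousOn.mono hK).pow 2).integrableOn_compact hKc
  rw [← setIntegral_eq_integral_of_forall_compl_eq_zero (s := K)
    (fun w hw => by rw [hlap0 w hw, mul_zero])] at hle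
  rw [← integral_inter_add_sdiff hVo.measurableSet hint.integrableOn,
    Set.inter_eq_self_of_subset_right hVK] at hle
  have h1 : ∫ w in V, (v w) ^ 2 * nrLap η w = (∫ w in V, (v w) ^ 2) * 6 := by
    rw [← integral_mul_const]
    exact setIntegral_congr_fun hVo.measurableSet fun w hw => by simp only [hlapV w hw]
  have hTm : MeasurableSet (K \ V) := hKc.measurableSet.diff hVo.measurableSet
  have h2 : (∫ w in K \ V, (v w) ^ 2) * (-|C|) ≤ ∫ w in K \ V, (v w) ^ 2 * nrLap η w := by
    rw [← integral_mul_const]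
    refine setIntegral_mono_on ((hvi.mono_set Set.sdiff_subset).mul_const _)
      hint.integrableOn hTm fun w hw => ?_
    apply mul_le_mul_of_nonneg_left _ (sq_nonneg _)
    have := hC w hw.1
    rw [Real.norm_eq_abs] at this
    linarith [neg_abs_le (nrLap η w), le_abs_self C]
  rw [h1] at hle
  linarith

lemma nr_cover {m : ℕ} (t : Fin (m + 1) → ℝ) (h0 : t 0 = 0)
    (h1 : t (Fin.last m) = 1) {u : ℝ} (hu : u ∈ Set.Icc (0 : ℝ) 1) :
    ∃ i : Fin m, u ∈ Set.Icc (t i.castSucc) (t i.succ) := by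
  by_contra! hne
  have key : ∀ k : Fin (m + 1), t k ≤ u := by
    intro k
    induction k using Fin.induction with
    | zero => rw [h0]; exact hu.1
    | succ i ih =>
      by_contra hlt
      exact hne i ⟨ih, (not_le.1 hlt).le⟩
  have hu1 : u = 1 := le_antisymm hu.2 (h1 ▸ key (Fin.last m))
  cases m with
  | zero =>
    have : (Fin.last 0) = 0 := rfl
    rw [this, h0] at h1
    norm_num at h1
  | succ k =>
    apply hne (Fin.last k)
    refine ⟨key _, ?_⟩
    rw [Fin.succ_last, h1]
    exact hu.2

lemma nr_cont {σ : ℝ → NE3} (h : PiecewiseLinear σ) : ContinuousOn σ (Set.Icc 0 1) := by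
  obtain ⟨m, t, hm, h0, h1, hs⟩ := h
  have hc : ContinuousOn σ (⋃ i : Fin m, Set.Icc (t i.castSucc) (t i.succ)) := by
    refine LocallyFinite.continuousOn_iUnion (locallyFinite_of_finite _)
      (fun i => isClosed_Icc) fun i => ?_
    refine ContinuousOn.congr (f := fun u => σ (t i.castSucc) +
        ((u - t i.castSucc) / (t i.succ - t i.castSucc)) •
          (σ (t i.succ) - σ (t i.castSucc))) ?_ (hs i)
    fun_prop
  exact hc.mono fun u hu => Set.mem_iUnion.2 (nr_cover t h0 h1 hu)

lemma nr_null {σ : ℝ → NE3} (h : PiecewiseLinear σ) : volume (σ '' Set.Icc 0 1) = 0 := by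
  obtain ⟨m, t, hm, h0, h1, hs⟩ := h
  have hsub : σ '' Set.Icc 0 1 ⊆ ⋃ i : Fin m,
      (AffineSubspace.mk' (σ (t i.castSucc))
        (Submodule.span ℝ {σ (t i.succ) - σ (t i.castSucc)}) : Set NE3) := by
    rintro _ ⟨u, hu, rfl⟩
    obtain ⟨i, hi⟩ := nr_cover t h0 h1 hu
    refine Set.mem_iUnion.2 ⟨i, ?_⟩
    rw [SetLike.mem_coe, AffineSubspace.mem_mk', hs i u hi]
    simp only [vsub_eq_sub, add_sub_cancel_left]
    exact Submodule.smul_mem _ _ (Submodule.mem_span_singleton_self _)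
  refine measure_mono_null hsub (measure_iUnion_null fun i => ?_)
  apply Measure.addHaar_affineSubspace
  intro htop
  have hd : (Submodule.span ℝ {σ (t i.succ) - σ (t i.castSucc)}) = ⊤ := by
    rw [← AffineSubspace.direction_mk' (σ (t i.castSucc))
        (Submodule.span ℝ {σ (t i.succ) - σ (t i.castSucc)}), htop,
        AffineSubspace.direction_top]
  have hr := finrank_span_le_card (R := ℝ) ({σ (t i.succ) - σ (t i.castSucc)} : Set NE3)
  rw [hd, finrank_top, finrank_euclideanSpace, Fintype.card_fin] at hr
  simp at hr

lemma nr_blowup (x : NE3) (j : Fin 3) (Φ : NE3 → ℝ)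
    (hΦ : ∀ z, Φ z = -((z - x) j) / (4 * Real.pi * ‖z - x‖ ^ 3))
    (hΦc : ContinuousOn Φ {x}ᶜ)
    {N : Set NE3} (hNc : IsClosed N) (hxN : x ∈ N) (hN : volume N = 0) {ρ : ℝ} (hρ : 0 < ρ)
    (M : ℝ) :
    ∃ K, IsCompact K ∧ K ⊆ Metric.ball x ρ \ N ∧ M < ∫ w in K, (Φ w) ^ 2 := by
  set c : ℝ := volume.real (Metric.ball (0 : NE3) 1) with hc
  have hcpos : 0 < c := by
    rw [hc, measureReal_def]
    exact ENNReal.toReal_pos (Metric.measure_ball_pos _ _ one_pos).ne' measure_ball_lt_top.ne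
  have hπ := Real.pi_pos
  set κ : ℝ := c / (16 * 4096 * Real.pi ^ 2) with hκ
  have hκpos : 0 < κ := by positivity
  set s : ℝ := min (ρ / 4) (κ / (|M| + 1)) with hs
  have hspos : 0 < s := by positivity
  have hsρ : s ≤ ρ / 4 := min_le_left _ _
  have hsM : M < κ / s := by
    have h1 : s ≤ κ / (|M| + 1) := min_le_right _ _
    rw [lt_div_iff₀ hspos]
    rw [le_div_iff₀ (by positivity)] at h1
    nlinarith [le_abs_self M]
  set p : NE3 := x + s • EuclideanSpace.single j 1 with hp
  have hvol : volume.real (Metric.ball p (s / 2)) = (s / 2) ^ 3 * c := by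
    have h := Measure.addHaar_ball (volume : Measure NE3) p (r := s / 2) (by positivity)
    rw [hc, measureReal_def, h, finrank_euclideanSpace, Fintype.card_fin, ENNReal.toReal_mul,
      ENNReal.toReal_ofReal (by positivity), measureReal_def]
  have hU : IsOpen (Metric.ball p (s / 2) \ N) := Metric.isOpen_ball.sdiff hNc
  have hUv : volume (Metric.ball p (s / 2) \ N) = volume (Metric.ball p (s / 2)) :=
    measure_sdiff_null hN
  have hlt : ENNReal.ofReal ((s / 2) ^ 3 * c / 2) < volume (Metric.ball p (s / 2) \ N) := by
    rw [hUv, ← ENNReal.ofReal_toReal (measure_ball_lt_top (μ := volume)).ne,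
      ← measureReal_def, hvol]
    rw [ENNReal.ofReal_lt_ofReal_iff (by positivity)]
    have : 0 < (s / 2) ^ 3 * c := by positivity
    linarith
  obtain ⟨K, hKU, hKc, hKv⟩ := hU.exists_lt_isCompact hlt
  have hKv' : (s / 2) ^ 3 * c / 2 ≤ volume.real K := by
    rw [measureReal_def]
    exact (ENNReal.ofReal_le_iff_le_toReal hKc.measure_lt_top.ne).1 hKv.le
  have hnorm : ∀ w ∈ Metric.ball p (s / 2), s / 2 ≤ (w - x) j ∧ ‖w - x‖ ≤ 2 * s := by
    intro w hw
    rw [Metric.mem_ball, dist_eq_norm] at hw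
    have e1 : w - x = (w - p) + s • EuclideanSpace.single j 1 := by rw [hp]; abel
    constructor
    · have h2 : |(w - p) j| ≤ ‖w - p‖ := PiLp.norm_apply_le (w - p) j
      have h3 := (abs_le.1 (h2.trans hw.le)).1
      have h4 : (w - x) j = (w - p) j + s := by rw [e1]; simp
      rw [h4]; linarith
    · rw [e1]
      refine (norm_add_le _ _).trans ?_
      rw [norm_smul]
      simp [abs_of_pos hspos]
      linarith
  refine ⟨K, hKc, fun w hw => ⟨?_, (hKU hw).2⟩, ?_⟩
  · rw [Metric.mem_ball, dist_eq_norm]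
    have := (hnorm w (hKU hw).1).2
    linarith
  · have hΦK : IntegrableOn (fun w => (Φ w) ^ 2) K :=
      ((hΦc.mono fun w hw hwx => (hKU hw).2 (by rw [hwx]; exact hxN)).pow 2).integrableOn_compact hKc
    have hlow : ∀ w ∈ K, (1 / (64 * Real.pi * s ^ 2)) ^ 2 ≤ (Φ w) ^ 2 := by
      intro w hw
      obtain ⟨h1, h2⟩ := hnorm w (hKU hw).1
      have hwx : 0 < ‖w - x‖ := by
        have : |(w - x) j| ≤ ‖w - x‖ := PiLp.norm_apply_le (w - x) j
        linarith [le_abs_self ((w - x) j)]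
      rw [hΦ w, neg_div, neg_sq]
      apply pow_le_pow_left₀ (by positivity)
      rw [div_le_div_iff₀ (by positivity) (by positivity)]
      have h3 : ‖w - x‖ ^ 3 ≤ (2 * s) ^ 3 := pow_le_pow_left₀ hwx.le h2 3
      calc 1 * (4 * Real.pi * ‖w - x‖ ^ 3) ≤ 1 * (4 * Real.pi * (2 * s) ^ 3) := by gcongr
        _ = (s / 2) * (64 * Real.pi * s ^ 2) := by ring
        _ ≤ _ := by gcongr
    have hI := setIntegral_ge_of_const_le_real hKc.measurableSet hKc.measure_lt_top.ne hlow hΦK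
    refine hsM.trans_le (le_trans ?_ hI)
    calc κ / s = (1 / (64 * Real.pi * s ^ 2)) ^ 2 * ((s / 2) ^ 3 * c / 2) := by
          rw [hκ]; field_simp; norm_num
      _ ≤ _ := by gcongr

lemma nr_sq_le {K : Set NE3} (hK : IsCompact K) {f g : NE3 → ℝ} (hf : ContinuousOn f K)
    (hg : ContinuousOn g K) :
    ∫ w in K, (f w) ^ 2 ≤ 2 * (∫ w in K, (f w - g w) ^ 2) + 2 * ∫ w in K, (g w) ^ 2 := by
  have i1 : IntegrableOn (fun w => (f w) ^ 2) K := (hf.pow 2).integrableOn_compact hK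
  have i2 : IntegrableOn (fun w => (g w) ^ 2) K := (hg.pow 2).integrableOn_compact hK
  have i3 : IntegrableOn (fun w => (f w - g w) ^ 2) K :=
    ((hf.sub hg).pow 2).integrableOn_compact hK
  rw [← integral_const_mul, ← integral_const_mul, ← integral_add (i3.const_mul 2) (i2.const_mul 2)]
  refine integral_mono i1 ((i3.const_mul 2).add (i2.const_mul 2)) fun w => ?_
  change f w ^ 2 ≤ 2 * (f w - g w) ^ 2 + 2 * g w ^ 2
  nlinarith [sq_nonneg (f w - 2 * g w)]

/-- **The needle-recovery formula after Proposition 3.1.** With the hypotheses of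
Proposition 3.1, the part `σ((0,1])` of the needle inside `Ω` coincides with the set of
points `z ∈ Ω` such that `∫_{B ∩ Ω} v_n² dz → +∞` for every open ball `B` centered at
`z`. -/
theorem needle_recovery (Ω : Set (EuclideanSpace ℝ (Fin 3))) (hΩo : IsOpen Ω)
    (hΩb : Bornology.IsBounded Ω)
    (x : EuclideanSpace ℝ (Fin 3)) (hx : x ∈ Ω)
    (σ : ℝ → EuclideanSpace ℝ (Fin 3)) (hσ : IsNeedle Ω x σ)
    (j : Fin 3) (Φ : EuclideanSpace ℝ (Fin 3) → ℝ)
    (hΦ : ∀ z, Φ z = -((z - x) j) / (4 * Real.pi * ‖z - x‖ ^ 3))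
    (v : ℕ → EuclideanSpace ℝ (Fin 3) → ℝ) (hharm : ∀ n, HarmonicOnSet (v n) Ω)
    (hconv : ∀ K : Set (EuclideanSpace ℝ (Fin 3)),
      K ⊆ Ω \ (σ '' Set.Icc 0 1) → IsCompact K →
      Tendsto (fun n => ∫ z in K, (v n z - Φ z) ^ 2) atTop (𝓝 0)) :
    σ '' Set.Ioc 0 1 =
      {z | z ∈ Ω ∧ ∀ r > (0 : ℝ),
        Tendsto (fun n => ∫⁻ w in Metric.ball z r ∩ Ω, ENNReal.ofReal ((v n w) ^ 2))
          atTop (𝓝 ⊤)} := by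
  set N := σ '' Set.Icc 0 1 with hNdef
  obtain ⟨hpl, hinj, hcl, hfr, hσ1, hin⟩ := hσ
  have hσc := nr_cont hpl
  have hNc : IsCompact N := isCompact_Icc.image_of_continuousOn hσc
  have hN0 : volume N = 0 := nr_null hpl
  have hxN : x ∈ N := ⟨1, by norm_num, hσ1⟩
  have hσ0 : σ 0 ∉ Ω := by
    rw [hΩo.frontier_eq] at hfr
    exact hfr.2
  have hΦc : ContinuousOn Φ {x}ᶜ := by
    rw [show Φ = _ from funext hΦ]
    refine ContinuousOn.div (by fun_prop) (by fun_prop) fun z hz => ?_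
    have : 0 < ‖z - x‖ := norm_pos_iff.2 (sub_ne_zero.2 hz)
    have := Real.pi_pos
    positivity
  have hvc : ∀ n, ContinuousOn (v n) Ω := fun n => (hharm n).1.continuousOn
  -- two-sided comparison of `v n` and `Φ` away from the needle
  have hA : ∀ K, K ⊆ Ω \ N → IsCompact K → ∀ᶠ n in atTop,
      ∫ w in K, (v n w) ^ 2 ≤ 2 * (∫ w in K, (Φ w) ^ 2) + 1 ∧
      ∫ w in K, (Φ w) ^ 2 ≤ 2 * (∫ w in K, (v n w) ^ 2) + 1 := by
    intro K hK hKc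
    have hΦK : ContinuousOn Φ K := hΦc.mono fun w hw hwx => (hK hw).2 (by rw [hwx]; exact hxN)
    filter_upwards [(hconv K hK hKc).eventually (gt_mem_nhds (show (0 : ℝ) < 1 / 2 by norm_num))]
      with n hn
    have hvK : ContinuousOn (v n) K := (hvc n).mono fun w hw => (hK hw).1
    have h1 := nr_sq_le hKc hvK hΦK
    have h2 := nr_sq_le hKc hΦK hvK
    have h3 : ∫ w in K, (Φ w - v n w) ^ 2 = ∫ w in K, (v n w - Φ w) ^ 2 := by
      congr 1
      funext w
      ring
    rw [h3] at h2
    constructor <;> linarith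
  ext z
  constructor
  · rintro ⟨t, ht, rfl⟩
    have hσΩ : ∀ u ∈ Set.Ioc (0 : ℝ) 1, σ u ∈ Ω := by
      intro u hu
      rcases hu.2.lt_or_eq with h | h
      · exact hin u ⟨hu.1, h⟩
      · rw [h, hσ1]
        exact hx
    refine ⟨hσΩ t ht, fun r hr => ?_⟩
    by_contra hnot
    rw [ENNReal.tendsto_nhds_top_iff_nnreal] at hnot
    push Not at hnot
    obtain ⟨M, hM⟩ := hnot
    -- a slightly earlier time whose arc stays in the ball
    obtain ⟨t', ht'0, ht't, ht'b⟩ : ∃ t', 0 ≤ t' ∧ t' < t ∧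
        ∀ u ∈ Set.Ioc t' t, σ u ∈ Metric.ball (σ t) r := by
      have hct : ContinuousWithinAt σ (Set.Icc 0 1) t := hσc t ⟨ht.1.le, ht.2⟩
      obtain ⟨d, hd, hd'⟩ := Metric.continuousWithinAt_iff.1 hct r hr
      refine ⟨max 0 (t - d), le_max_left _ _, max_lt ht.1 (by linarith), fun u hu => ?_⟩
      have h1 := (max_lt_iff.1 hu.1)
      apply hd' ⟨h1.1.le, hu.2.trans ht.2⟩
      rw [Real.dist_eq, abs_lt]
      constructor <;> linarith [hu.2, h1.2]
    set S := σ '' Set.Icc t 1 with hSdef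
    have hSc : IsCompact S := isCompact_Icc.image_of_continuousOn
      (hσc.mono (Set.Icc_subset_Icc_left ht.1.le))
    have hQc : IsCompact (σ '' Set.Icc 0 t') := isCompact_Icc.image_of_continuousOn
      (hσc.mono (Set.Icc_subset_Icc_right (ht't.le.trans ht.2)))
    have hSsub : S ⊆ Ω \ (σ '' Set.Icc 0 t') := by
      rintro _ ⟨u, hu, rfl⟩
      refine ⟨hσΩ u ⟨ht.1.trans_le hu.1, hu.2⟩, ?_⟩
      rintro ⟨u', hu', he⟩
      have := hinj ⟨hu'.1, hu'.2.trans (ht't.le.trans ht.2)⟩ ⟨ht.1.le.trans hu.1, hu.2⟩ he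
      linarith [hu.1, hu'.2]
    obtain ⟨δ, hδ, hδs⟩ := hSc.exists_cthickening_subset_open
      (hΩo.sdiff hQc.isClosed) hSsub
    set T := Metric.cthickening δ S \ Metric.thickening (δ / 2) S with hT
    obtain ⟨C, hC0, hC⟩ := nr_control hΩo hSc hδ (hδs.trans Set.sdiff_subset)
    have hTc : IsCompact T := hSc.cthickening.diff Metric.isOpen_thickening
    have hTΩ : T ⊆ Ω := fun w hw => (hδs hw.1).1
    set T1 := T \ Metric.ball (σ t) r with hT1
    have hT1c : IsCompact T1 := hTc.diff Metric.isOpen_ball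
    have hT1s : T1 ⊆ Ω \ N := by
      intro w hw
      refine ⟨hTΩ hw.1, ?_⟩
      rintro ⟨u, hu, rfl⟩
      rcases le_or_gt t u with h | h
      · exact hw.1.2 (Metric.self_subset_thickening (by linarith) S ⟨u, ⟨h, hu.2⟩, rfl⟩)
      · rcases le_or_gt u t' with h' | h'
        · exact (hδs hw.1.1).2 ⟨u, ⟨hu.1, h'⟩, rfl⟩
        · exact hw.2 (ht'b u ⟨h', h.le⟩)
    have hxS : x ∈ S := ⟨1, ⟨ht.2, le_rfl⟩, hσ1⟩
    set B := C * (M + (2 * (∫ w in T1, (Φ w) ^ 2) + 1)) with hB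
    obtain ⟨K, hKc, hKs, hKΦ⟩ := nr_blowup x j Φ hΦ hΦc hNc.isClosed hxN hN0
      (show 0 < δ / 2 by linarith) (2 * B + 1)
    have hKV : K ⊆ Metric.thickening (δ / 2) S := fun w hw =>
      Metric.ball_subset_thickening hxS _ (hKs hw).1
    have hVcl : Metric.thickening (δ / 2) S ⊆ Metric.cthickening δ S :=
      Metric.thickening_subset_cthickening_of_le (by linarith) S
    have hKΩ : K ⊆ Ω \ N := fun w hw => ⟨(hδs (hVcl (hKV hw))).1, (hKs hw).2⟩
    obtain ⟨n, hnM, ⟨hn1, -⟩, -, hn2⟩ := (hM.and_eventually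
      ((hA T1 hT1s hT1c).and (hA K hKΩ hKc))).exists
    have hvcl : IntegrableOn (fun w => (v n w) ^ 2) (Metric.cthickening δ S) :=
      (((hvc n).mono fun w hw => (hδs hw).1).pow 2).integrableOn_compact hSc.cthickening
    have hvT : IntegrableOn (fun w => (v n w) ^ 2) T := hvcl.mono_set Set.sdiff_subset
    have hball : ∫ w in T ∩ Metric.ball (σ t) r, (v n w) ^ 2 ≤ M := by
      have h1 := ofReal_integral_eq_lintegral_ofReal
        (hvT.mono_set (Set.inter_subset_left (t := Metric.ball (σ t) r)))
        (ae_of_all _ fun w => sq_nonneg (v n w))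
      have h2 : ENNReal.ofReal (∫ w in T ∩ Metric.ball (σ t) r, (v n w) ^ 2) ≤ (M : ℝ≥0∞) := by
        rw [h1]
        refine le_trans (lintegral_mono_set ?_) hnM
        exact fun w hw => ⟨hw.2, hTΩ hw.1⟩
      have h3 := ENNReal.toReal_mono ENNReal.coe_ne_top h2
      rwa [ENNReal.toReal_ofReal (integral_nonneg fun w => sq_nonneg _),
        ENNReal.coe_toReal] at h3
    have hTle : ∫ w in T, (v n w) ^ 2 ≤ M + (2 * (∫ w in T1, (Φ w) ^ 2) + 1) := by
      rw [← integral_inter_add_sdiff Metric.isOpen_ball.measurableSet hvT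
        (t := Metric.ball (σ t) r)]
      exact add_le_add hball hn1
    have hKle : ∫ w in K, (v n w) ^ 2 ≤ ∫ w in Metric.thickening (δ / 2) S, (v n w) ^ 2 :=
      setIntegral_mono_set (hvcl.mono_set hVcl) (ae_of_all _ fun w => sq_nonneg _)
        (LE.le.eventuallyLE hKV)
    have h4 := hC (v n) (hharm n)
    have h5 := mul_le_mul_of_nonneg_left hTle hC0
    linarith
  · rintro ⟨hzΩ, hz⟩
    by_contra hzn
    have hzN : z ∉ N := by
      rintro ⟨u, hu, rfl⟩
      rcases hu.1.lt_or_eq with h | h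
      · exact hzn ⟨u, ⟨h, hu.2⟩, rfl⟩
      · rw [← h] at hzΩ
        exact hσ0 hzΩ
    obtain ⟨r, hr, hrs⟩ := Metric.nhds_basis_closedBall.mem_iff.1
      ((hΩo.sdiff hNc.isClosed).mem_nhds ⟨hzΩ, hzN⟩)
    have hKc : IsCompact (Metric.closedBall z r) := isCompact_closedBall z r
    have h1 := hA _ hrs hKc
    set B := 2 * (∫ w in Metric.closedBall z r, (Φ w) ^ 2) + 1 with hB
    have h2 := (hz r hr).eventually (lt_mem_nhds (ENNReal.ofReal_lt_top (r := B)))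
    obtain ⟨n, ⟨hn1, -⟩, hn2⟩ := (h1.and h2).exists
    have hi : IntegrableOn (fun w => (v n w) ^ 2) (Metric.closedBall z r) :=
      (((hvc n).mono fun w hw => (hrs hw).1).pow 2).integrableOn_compact hKc
    have h3 := ofReal_integral_eq_lintegral_ofReal hi (ae_of_all _ fun w => sq_nonneg (v n w))
    have h4 := ENNReal.ofReal_le_ofReal hn1
    rw [h3] at h4
    refine absurd (hn2.trans_le (le_trans (lintegral_mono_set ?_) h4)) (lt_irrefl _)
    exact fun w hw => Metric.ball_subset_closedBall hw.1
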